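/- If kg(k) → 0 as k → ∞ (with g(k) > 0, Σg(k) = ∞), then the singular symbolic suspension flow over ({0,1}^ℤ, σ) with roof f(u) = g(k_u) has infinite topological entropy. -/

import Mathlib

open MeasureTheory Filter Topology
open scoped ENNReal

/-- Shannon entropy of a measure on a finite space. -/
noncomputable def shannonEnt {β : Type*} [Fintype β] [MeasurableSpace β] (ν : Measure β) : ℝ :=
  ∑ b : β, Real.negMulLog (ν {b}).toReal

/-- Dynamical entropy of `(S,μ)` with respect to the finite observable `P`. -/
noncomputable def obsEntropy {α : Type*} [MeasurableSpace α] (S : α → α) (μ : Measure α)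
    {m : ℕ} (P : α → Fin m) : ℝ≥0∞ :=
  Filter.liminf (fun n : ℕ =>
    ENNReal.ofReal (shannonEnt (μ.map fun x => fun i : Fin n => P (S^[(i : ℕ)] x)) / n))
    Filter.atTop

/-- Kolmogorov–Sinai (measure-theoretic) entropy of `(S,μ)`. -/
noncomputable def kolSinai {α : Type*} [MeasurableSpace α] (S : α → α) (μ : Measure α) : ℝ≥0∞ :=
  ⨆ (m : ℕ) (P : α → Fin m) (_ : Measurable P), obsEntropy S μ P

/-- The full shift space `{0,1}^ℤ`. -/
abbrev BSeq := ℤ → Bool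

/-- The zero sequence `0^∞`. -/
def zeroSeq : BSeq := fun _ => false

/-- The shift `σ`. -/
def shiftMap : BSeq → BSeq := fun u n => u (n + 1)

/-- `k_u = min {|n| : u_n = 1}`. -/
noncomputable def kabs (u : BSeq) : ℕ := sInf {m : ℕ | ∃ n : ℤ, n.natAbs = m ∧ u n = true}

open Classical in
/-- The roof function `f(u) = g(k_u)`, `f(0^∞) = 0`. -/
noncomputable def fRoof (g : ℕ → ℝ) (u : BSeq) : ℝ := if u = zeroSeq then 0 else g (kabs u)

/-!
Under the Bernoulli measure `μ_p` on `{0,1}^ℤ` the first `1` on either side of the origin is at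
distance `k` with probability `p (1 - p) ^ k`, so `∫ f dμ_p ≤ 2 p ∑ g(k) (1 - p) ^ k`, whereas the
entropy of `μ_p` is at least `-p log p`. Since `g(k) = o(1 / k)`, comparison with
`∑ x ^ k / k = -log (1 - x)` gives `∑ g(k) (1 - p) ^ k = o(log p)` as `p → 0`. Hence
`h(μ_p) / ∫ f dμ_p → ∞`.
-/

open ProbabilityTheory unitInterval

section ShannonEntropy

lemma negMulLog_prod {ι : Type*} [DecidableEq ι] (s : Finset ι) (x : ι → ℝ) :
    Real.negMulLog (∏ i ∈ s, x i) = ∑ i ∈ s, Real.negMulLog (x i) * ∏ j ∈ s.erase i, x j := by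
  induction s using Finset.induction_on with
  | empty => simp
  | insert a s ha ih =>
    have herase : ∀ i ∈ s, ∏ j ∈ (insert a s).erase i, x j = x a * ∏ j ∈ s.erase i, x j := by
      intro i hi
      rw [Finset.erase_insert_of_ne (ne_of_mem_of_not_mem hi ha).symm,
        Finset.prod_insert fun h => ha (Finset.mem_of_mem_erase h)]
    rw [Finset.prod_insert ha, Real.negMulLog_mul, ih, Finset.sum_insert ha,
      Finset.erase_insert ha, Finset.mul_sum, mul_comm]
    congr 1
    refine Finset.sum_congr rfl fun i hi => ?_
    rw [herase i hi]
    ring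

theorem shannonEnt_pi {ι : Type*} [Fintype ι] [DecidableEq ι] {β : ι → Type*}
    [∀ i, Fintype (β i)] [∀ i, MeasurableSpace (β i)] [∀ i, MeasurableSingletonClass (β i)]
    (ν : ∀ i, Measure (β i)) [∀ i, IsProbabilityMeasure (ν i)] :
    shannonEnt (Measure.pi ν) = ∑ i, shannonEnt (ν i) := by
  have hsum (i : ι) : ∑ c, (ν i).real {c} = 1 := by simp
  have hterm (i : ι) :
      ∑ b : ∀ i, β i, Real.negMulLog ((ν i).real {b i}) * ∏ j ∈ Finset.univ.erase i,
        (ν j).real {b j} = shannonEnt (ν i) := by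
    let f (j : ι) (c : β j) : ℝ :=
      if j = i then Real.negMulLog ((ν j).real {c}) else (ν j).real {c}
    have hne : ∀ j ∈ Finset.univ.erase i, j ≠ i := fun j => Finset.ne_of_mem_erase
    calc _ = ∑ b : ∀ i, β i, ∏ j, f j (b j) := by
          refine Finset.sum_congr rfl fun b _ => ?_
          rw [← Finset.mul_prod_erase _ _ (Finset.mem_univ i)]
          exact congrArg₂ _ (if_pos rfl).symm
            (Finset.prod_congr rfl fun j hj => (if_neg (hne j hj)).symm)
      _ = ∏ j, ∑ c, f j c := (Fintype.prod_sum f).symm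
      _ = ∑ c, f i c := by
          rw [← Finset.mul_prod_erase _ _ (Finset.mem_univ i), Finset.prod_eq_one, mul_one]
          intro j hj
          simp only [f, if_neg (hne j hj), hsum]
      _ = shannonEnt (ν i) := Finset.sum_congr rfl fun c _ => if_pos rfl
  simp only [shannonEnt, Measure.pi_singleton, ENNReal.toReal_prod, negMulLog_prod]
  rw [Finset.sum_comm]
  exact Finset.sum_congr rfl fun i _ => hterm i

lemma shannonEnt_map_equiv {β γ : Type*} [Fintype β] [Fintype γ] [MeasurableSpace β]
    [MeasurableSpace γ] (e : β ≃ᵐ γ) (ν : Measure β) :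
    shannonEnt (ν.map e) = shannonEnt ν := by
  refine (Fintype.sum_equiv e.toEquiv _ _ fun b => ?_).symm
  rw [e.map_apply]
  congr 3
  ext c
  simp

lemma shannonEnt_bernoulliMeasure (p : unitInterval) :
    shannonEnt (bernoulliMeasure true false p) = Real.binEntropy p := by
  rw [Real.binEntropy_eq_negMulLog_add_negMulLog_one_sub]
  simp [shannonEnt]

end ShannonEntropy

section IndependentProcess

variable {α : Type*} [MeasurableSpace α] {S : α → α} {μ : Measure α}

theorem obsEntropy_eq_of_iIndepFun (hS : MeasurePreserving S μ μ) {m : ℕ} {P : α → Fin m}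
    (hP : Measurable P) (hind : iIndepFun (fun (n : ℕ) x => P (S^[n] x)) μ) :
    obsEntropy S μ P = ENNReal.ofReal (shannonEnt (μ.map P)) := by
  have := hind.isProbabilityMeasure
  have := Measure.isProbabilityMeasure_map (μ := μ) hP.aemeasurable
  have hmeas (n : ℕ) : Measurable fun x => P (S^[n] x) := hP.comp (hS.measurable.iterate n)
  have hblock (n : ℕ) : μ.map (fun x => fun i : Fin n => P (S^[(i : ℕ)] x)) =
      Measure.pi fun _ => μ.map P := by
    rw [(iIndepFun_iff_map_fun_eq_pi_map fun i : Fin n => (hmeas i).aemeasurable).1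
      (hind.precomp Fin.val_injective)]
    congr 1 with i : 1
    rw [← Function.comp_def P, ← Measure.map_map hP (hS.measurable.iterate i),
      (hS.iterate i).map_eq]
  refine (tendsto_const_nhds.congr' ?_).liminf_eq
  filter_upwards [eventually_ne_atTop 0] with n hn
  rw [hblock, shannonEnt_pi, Fin.sum_const, nsmul_eq_mul,
    mul_div_cancel_left₀ _ (Nat.cast_ne_zero.2 hn)]

theorem ofReal_shannonEnt_le_kolSinai {β : Type*} [Fintype β] [MeasurableSpace β]
    [MeasurableSingletonClass β] (hS : MeasurePreserving S μ μ) {X : α → β} (hX : Measurable X)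
    (hind : iIndepFun (fun (n : ℕ) x => X (S^[n] x)) μ) :
    ENNReal.ofReal (shannonEnt (μ.map X)) ≤ kolSinai S μ := by
  let e : β ≃ᵐ Fin (Fintype.card β) :=
    ⟨Fintype.equivFin β, measurable_of_finite _, measurable_of_finite _⟩
  have hent : obsEntropy S μ (e ∘ X) = ENNReal.ofReal (shannonEnt (μ.map X)) := by
    rw [obsEntropy_eq_of_iIndepFun hS (e.measurable.comp hX)
        (hind.comp (fun _ => e) fun _ => e.measurable),
      ← Measure.map_map e.measurable hX, shannonEnt_map_equiv]
  exact hent.symm.le.trans (le_iSup₂_of_le _ (e ∘ X) (le_iSup_of_le (e.measurable.comp hX) le_rfl))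

end IndependentProcess

section PowerSeries

lemma hasSum_pow_mul_inv {x : ℝ} (hx : x ∈ Set.Ico (0 : ℝ) 1) :
    HasSum (fun k : ℕ => x ^ k * (k : ℝ)⁻¹) (-Real.log (1 - x)) := by
  rw [← hasSum_nat_add_iff' 1]
  simpa [div_eq_mul_inv] using
    Real.hasSum_pow_div_log_of_abs_lt_one (abs_lt.2 ⟨by linarith [hx.1], hx.2⟩)

lemma summable_pow_mul_norm {E : Type*} [NormedAddCommGroup E] {a : ℕ → E}
    (ha : a =O[atTop] fun k : ℕ => (k : ℝ)⁻¹) {x : ℝ} (hx : x ∈ Set.Ico (0 : ℝ) 1) :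
    Summable fun k => x ^ k * ‖a k‖ :=
  summable_of_isBigO_nat (hasSum_pow_mul_inv hx).summable
    ((Asymptotics.isBigO_refl _ _).mul ha.norm_left)

variable {E : Type*} [NormedAddCommGroup E] [NormedSpace ℝ E] {a : ℕ → E} {b : ℕ → ℝ}

lemma norm_tsum_pow_smul_le {c x : ℝ} {K : ℕ} (hc : 0 ≤ c) (hb : ∀ k, 0 ≤ b k)
    (hab : ∀ k ≥ K, ‖a k‖ ≤ c * b k) (hx : x ∈ Set.Ico (0 : ℝ) 1)
    (hsum : Summable fun k => x ^ k * b k) :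
    ‖∑' k, x ^ k • a k‖ ≤ ∑ k ∈ Finset.range K, ‖a k‖ + c * ∑' k, x ^ k * b k := by
  have hhead : HasSum (fun k => if k ∈ Finset.range K then ‖a k‖ else 0)
      (∑ k ∈ Finset.range K, ‖a k‖) := by
    rw [← Finset.sum_congr rfl fun k hk => if_pos hk]
    exact hasSum_sum_of_ne_finset_zero fun k hk => if_neg hk
  refine tsum_of_norm_bounded (hhead.add (hsum.hasSum.mul_left c)) fun k => ?_
  have hxk : 0 ≤ x ^ k := pow_nonneg hx.1 k
  rw [norm_smul, Real.norm_of_nonneg hxk]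
  split_ifs with hk
  · have htail : 0 ≤ c * (x ^ k * b k) := mul_nonneg hc (mul_nonneg hxk (hb k))
    linarith [mul_le_of_le_one_left (norm_nonneg (a k)) (pow_le_one₀ hx.1 hx.2.le (n := k))]
  · linarith [mul_le_mul_of_nonneg_left (hab k (by simpa using hk)) hxk]

-- Abel's argument: for `x` near `1` the divergent sum `∑ x ^ k * b k` absorbs the finitely many
-- terms where `‖a k‖ ≤ ε / 2 * b k` fails.
theorem isLittleO_tsum_pow_smul (hb : ∀ k, 0 ≤ b k)
    (hsum : ∀ x ∈ Set.Ico (0 : ℝ) 1, Summable fun k => x ^ k * b k)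
    (htop : Tendsto (fun x : ℝ => ∑' k, x ^ k * b k) (𝓝[<] 1) atTop) (hab : a =o[atTop] b) :
    (fun x : ℝ => ∑' k, x ^ k • a k) =o[𝓝[<] 1] fun x => ∑' k, x ^ k * b k := by
  refine Asymptotics.isLittleO_iff.2 fun ε hε => ?_
  have hε2 : 0 < ε / 2 := half_pos hε
  obtain ⟨K, hK⟩ := eventually_atTop.1 (Asymptotics.isLittleO_iff.1 hab hε2)
  simp only [Real.norm_of_nonneg (hb _)] at hK
  filter_upwards [htop.eventually_ge_atTop ((∑ k ∈ Finset.range K, ‖a k‖) / (ε / 2)),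
    Ico_mem_nhdsLT zero_lt_one] with x hlarge hx
  have hhead : ∑ k ∈ Finset.range K, ‖a k‖ ≤ ε / 2 * ∑' k, x ^ k * b k :=
    (div_le_iff₀' hε2).1 hlarge
  calc ‖∑' k, x ^ k • a k‖
      ≤ ∑ k ∈ Finset.range K, ‖a k‖ + ε / 2 * ∑' k, x ^ k * b k :=
        norm_tsum_pow_smul_le hε2.le hb hK hx (hsum x hx)
    _ ≤ ε * ∑' k, x ^ k * b k := by linarith
    _ ≤ ε * ‖∑' k, x ^ k * b k‖ := by gcongr; exact Real.le_norm_self _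

theorem isLittleO_tsum_pow_smul_log (ha : a =o[atTop] fun k : ℕ => (k : ℝ)⁻¹) :
    (fun x : ℝ => ∑' k, x ^ k • a k) =o[𝓝[<] 1] fun x => Real.log (1 - x) := by
  have hlog : (fun x : ℝ => ∑' k : ℕ, x ^ k * (k : ℝ)⁻¹) =ᶠ[𝓝[<] 1]
      fun x => -Real.log (1 - x) := by
    filter_upwards [Ico_mem_nhdsLT zero_lt_one] with x hx using (hasSum_pow_mul_inv hx).tsum_eq
  have hone_sub : Tendsto (fun x : ℝ => 1 - x) (𝓝[<] 1) (𝓝[>] 0) := by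
    refine tendsto_nhdsWithin_iff.2 ⟨tendsto_nhdsWithin_of_tendsto_nhds ?_, ?_⟩
    · exact (continuous_const.sub continuous_id).tendsto' _ _ (sub_self 1)
    · filter_upwards [self_mem_nhdsWithin] with x hx using sub_pos.2 (Set.mem_Iio.1 hx)
  have htop : Tendsto (fun x : ℝ => ∑' k : ℕ, x ^ k * (k : ℝ)⁻¹) (𝓝[<] 1) atTop :=
    (tendsto_neg_atBot_atTop.comp (Real.tendsto_log_nhdsGT_zero.comp hone_sub)).congr' hlog.symm
  exact Asymptotics.isLittleO_neg_right.1 <|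
    (isLittleO_tsum_pow_smul (fun k => by positivity)
      (fun x hx => (hasSum_pow_mul_inv hx).summable) htop ha).trans_eventuallyEq hlog

end PowerSeries

section Asymptotics

lemma tendsto_enorm_div_enorm_nhds_top {ι E F : Type*} [NormedAddCommGroup E]
    [NormedAddCommGroup F] {l : Filter ι} {u : ι → E} {v : ι → F} (huv : u =o[l] v)
    (hv : ∀ᶠ i in l, v i ≠ 0) :
    Tendsto (fun i => ‖v i‖ₑ / ‖u i‖ₑ) l (𝓝 ⊤) := by
  refine ENNReal.tendsto_nhds_top fun n => ?_
  have hn : (0 : ℝ) < n + 1 := n.cast_add_one_pos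
  filter_upwards [Asymptotics.isLittleO_iff.1 huv (inv_pos.2 hn), hv] with i hi hvi
  have hle : (n + 1 : ℕ) * ‖u i‖ₑ ≤ ‖v i‖ₑ := by
    rw [le_inv_mul_iff₀ hn] at hi
    simp only [← ofReal_norm]
    rw [← ENNReal.ofReal_natCast, ← ENNReal.ofReal_mul (Nat.cast_nonneg _)]
    exact ENNReal.ofReal_le_ofReal (by exact_mod_cast hi)
  calc (n : ℝ≥0∞) < (n + 1 : ℕ) := by exact_mod_cast n.lt_succ_self
    _ ≤ ‖v i‖ₑ / ‖u i‖ₑ :=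
        (ENNReal.le_div_iff_mul_le (Or.inr (enorm_ne_zero.2 hvi)) (Or.inl enorm_ne_top)).2 hle

lemma isLittleO_natCast_inv_of_tendsto_mul {g : ℕ → ℝ}
    (hg : Tendsto (fun k : ℕ => (k : ℝ) * g k) atTop (𝓝 0)) :
    g =o[atTop] fun k : ℕ => (k : ℝ)⁻¹ := by
  refine (Asymptotics.isLittleO_iff_tendsto' ?_).2
    (hg.congr fun k => by rw [div_inv_eq_mul, mul_comm])
  filter_upwards [eventually_ne_atTop 0] with k hk hinv
  exact absurd hinv (inv_ne_zero (Nat.cast_ne_zero.2 hk))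

end Asymptotics

section FirstOne

lemma exists_natAbs_eq_kabs {u : BSeq} (hu : u ≠ zeroSeq) :
    ∃ n : ℤ, n.natAbs = kabs u ∧ u n = true := by
  refine Nat.sInf_mem (s := {m | ∃ n : ℤ, n.natAbs = m ∧ u n = true}) ?_
  obtain ⟨n, hn⟩ := Function.ne_iff.1 hu
  exact ⟨_, n, rfl, by simpa [zeroSeq] using hn⟩

lemma apply_eq_false_of_natAbs_lt_kabs {u : BSeq} {n : ℤ} (hn : n.natAbs < kabs u) :
    u n = false := by
  by_contra h
  exact Nat.notMem_of_lt_sInf hn ⟨n, rfl, by simpa using h⟩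

/-- The nonzero sequences with `k_u = k`. The zero sequence is excluded because `kabs zeroSeq` is
the junk value `sInf ∅ = 0`. -/
def kabsFiber (k : ℕ) : Set BSeq := {u | u ≠ zeroSeq ∧ kabs u = k}

lemma kabsFiber_eq (k : ℕ) : kabsFiber k =
    {u | (∃ n : ℤ, n.natAbs = k ∧ u n = true) ∧ ∀ n : ℤ, n.natAbs < k → u n = false} := by
  ext u
  constructor
  · rintro ⟨hu, rfl⟩
    exact ⟨exists_natAbs_eq_kabs hu, fun n => apply_eq_false_of_natAbs_lt_kabs⟩
  · rintro ⟨⟨n, rfl, hun⟩, hzero⟩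
    have hu : u ≠ zeroSeq := fun h => by simp [h, zeroSeq] at hun
    have hle : kabs u ≤ n.natAbs := Nat.sInf_le ⟨n, rfl, hun⟩
    refine ⟨hu, hle.antisymm (le_of_not_gt fun hlt => ?_)⟩
    obtain ⟨m, hm, hum⟩ := exists_natAbs_eq_kabs hu
    simp [hzero m (hm.trans_lt hlt)] at hum

lemma measurableSet_kabsFiber (k : ℕ) : MeasurableSet (kabsFiber k) := by
  rw [kabsFiber_eq]
  measurability

lemma enorm_fRoof (g : ℕ → ℝ) (u : BSeq) :
    ‖fRoof g u‖ₑ = ∑' k, (kabsFiber k).indicator (fun _ => ‖g k‖ₑ) u := by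
  by_cases hu : u = zeroSeq
  · simp [fRoof, kabsFiber, hu]
  · have hmem : u ∈ kabsFiber (kabs u) := ⟨hu, rfl⟩
    rw [tsum_eq_single (kabs u) fun k hk => Set.indicator_of_notMem (fun h => hk h.2.symm) _,
      Set.indicator_of_mem hmem, fRoof, if_neg hu]

lemma fRoof_nonneg {g : ℕ → ℝ} (hg : ∀ k, 0 ≤ g k) (u : BSeq) : 0 ≤ fRoof g u := by
  unfold fRoof
  split_ifs
  exacts [le_rfl, hg _]

lemma norm_integral_fRoof_le (g : ℕ → ℝ) (μ : Measure BSeq) [IsFiniteMeasure μ] :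
    ‖∫ u, fRoof g u ∂μ‖ ≤ ∑' k, ‖g k‖ * μ.real (kabsFiber k) := by
  calc ‖∫ u, fRoof g u ∂μ‖ ≤ (∫⁻ u, ‖fRoof g u‖ₑ ∂μ).toReal := by
        simpa only [ofReal_norm] using norm_integral_le_lintegral_norm (fRoof g)
    _ = (∑' k, ‖g k‖ₑ * μ (kabsFiber k)).toReal := by
        simp_rw [enorm_fRoof]
        rw [lintegral_tsum fun k =>
          (measurable_const.indicator (measurableSet_kabsFiber k)).aemeasurable]
        simp_rw [lintegral_indicator_const (measurableSet_kabsFiber _)]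
    _ = ∑' k, ‖g k‖ * μ.real (kabsFiber k) := by
        rw [ENNReal.tsum_toReal_eq fun k => ENNReal.mul_ne_top enorm_ne_top (measure_ne_top _ _)]
        simp only [ENNReal.toReal_mul, toReal_enorm, measureReal_def]

end FirstOne

section BernoulliShift

/-- The Bernoulli measure `μ_p` on `{0,1}^ℤ`: the coordinates are independent and equal to `1` with
probability `p`. -/
noncomputable def bernoulliShift (p : I) : Measure BSeq :=
  Measure.infinitePi fun _ : ℤ => bernoulliMeasure true false p

variable (p : I)

instance : IsProbabilityMeasure (bernoulliShift p) := by
  unfold bernoulliShift; infer_instance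

lemma measurePreserving_shiftMap_bernoulliShift :
    MeasurePreserving shiftMap (bernoulliShift p) (bernoulliShift p) :=
  ⟨by unfold shiftMap; fun_prop, Measure.map_infinitePi_infinitePi_of_inj
    (P := fun _ : ℤ => bernoulliMeasure true false p) (add_left_injective (1 : ℤ))⟩

lemma map_eval_bernoulliShift (n : ℤ) :
    (bernoulliShift p).map (fun u => u n) = bernoulliMeasure true false p :=
  Measure.infinitePi_map_eval _ n

lemma shiftMap_iterate_apply (n : ℕ) (u : BSeq) (k : ℤ) : shiftMap^[n] u k = u (k + n) := by
  induction n generalizing u with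
  | zero => simp
  | succ n ih =>
    rw [Function.iterate_succ_apply, ih, shiftMap]
    push_cast
    ring_nf

lemma iIndepFun_shiftMap_iterate_bernoulliShift :
    iIndepFun (fun (n : ℕ) u => shiftMap^[n] u 0) (bernoulliShift p) := by
  simp only [shiftMap_iterate_apply, zero_add]
  exact (iIndepFun_infinitePi (X := fun _ b => b) fun _ => measurable_id).precomp
    (Nat.cast_injective (R := ℤ))

theorem ofReal_binEntropy_le_kolSinai_bernoulliShift :
    ENNReal.ofReal (Real.binEntropy p) ≤ kolSinai shiftMap (bernoulliShift p) := by
  rw [← shannonEnt_bernoulliMeasure, ← map_eval_bernoulliShift p 0]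
  exact ofReal_shannonEnt_le_kolSinai (measurePreserving_shiftMap_bernoulliShift p)
    (measurable_pi_apply 0) (iIndepFun_shiftMap_iterate_bernoulliShift p)

lemma enorm_negMulLog_le_kolSinai_bernoulliShift :
    ‖Real.negMulLog p‖ₑ ≤ kolSinai shiftMap (bernoulliShift p) := by
  refine le_trans ?_ (ofReal_binEntropy_le_kolSinai_bernoulliShift p)
  rw [Real.enorm_of_nonneg (Real.negMulLog_nonneg p.2.1 p.2.2),
    Real.binEntropy_eq_negMulLog_add_negMulLog_one_sub]
  exact ENNReal.ofReal_le_ofReal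
    (le_add_of_nonneg_right (Real.negMulLog_nonneg (σ p).2.1 (σ p).2.2))

lemma bernoulliShift_real_cylinder {m : ℤ} {s : Finset ℤ} (hm : m ∉ s) :
    (bernoulliShift p).real {u | u m = true ∧ ∀ n ∈ s, u n = false} = p * (1 - p) ^ s.card := by
  have hpi : {u : BSeq | u m = true ∧ ∀ n ∈ s, u n = false} =
      Set.pi (insert m s : Finset ℤ) fun n => {decide (n = m)} := by
    ext u
    simp only [Set.mem_pi, Finset.mem_coe, Finset.forall_mem_insert, Set.mem_singleton_iff,
      Set.mem_ofPred_eq, decide_true]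
    exact and_congr_right' (forall₂_congr fun n hn => by simp [ne_of_mem_of_not_mem hn hm])
  have hfalse : ∀ n ∈ s, (bernoulliMeasure true false p).real {decide (n = m)} = 1 - p :=
    fun n hn => by simp [ne_of_mem_of_not_mem hn hm]
  rw [hpi, bernoulliShift, measureReal_def,
    Measure.infinitePi_pi _ fun _ _ => measurableSet_singleton _, ENNReal.toReal_prod,
    Finset.prod_insert hm]
  simp only [← measureReal_def]
  rw [Finset.prod_congr rfl hfalse, Finset.prod_const]
  simp

lemma bernoulliShift_real_kabsFiber_le (k : ℕ) :
    (bernoulliShift p).real (kabsFiber k) ≤ 2 * (p * (1 - p) ^ k) := by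
  have hcover : kabsFiber k ⊆
      {u | u k = true ∧ ∀ n ∈ Finset.Ico (0 : ℤ) k, u n = false} ∪
        {u | u (-k) = true ∧ ∀ n ∈ Finset.Ioc (-k : ℤ) 0, u n = false} := by
    rw [kabsFiber_eq]
    rintro u ⟨⟨n, hn, hun⟩, hzero⟩
    rcases Int.natAbs_eq n with h | h <;> rw [hn] at h <;> subst h
    · exact Or.inl ⟨hun, fun j hj => hzero j (by grind)⟩
    · exact Or.inr ⟨hun, fun j hj => hzero j (by grind)⟩
  refine (measureReal_mono hcover).trans ((measureReal_union_le _ _).trans_eq ?_)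
  rw [bernoulliShift_real_cylinder p (by simp), bernoulliShift_real_cylinder p (by simp)]
  simp [two_mul]

lemma bernoulliShift_ne_dirac_zeroSeq (hp : 0 < p) : bernoulliShift p ≠ Measure.dirac zeroSeq := by
  intro h
  have hmap := map_eval_bernoulliShift p 0
  rw [h, Measure.map_dirac' (measurable_pi_apply 0)] at hmap
  have hmass := congrArg (fun ν => ν.real {true}) hmap
  have hzero : (0 : ℝ) = p := by simpa [zeroSeq, measureReal_def] using hmass
  exact hp.ne (Subtype.ext hzero)

end BernoulliShift

section Roof

lemma norm_integral_fRoof_bernoulliShift_le {g : ℕ → ℝ} {p : I}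
    (hg : Summable fun k => (1 - p : ℝ) ^ k * ‖g k‖) :
    ‖∫ u, fRoof g u ∂bernoulliShift p‖ ≤ 2 * (p * ∑' k, (1 - p : ℝ) ^ k * ‖g k‖) := by
  have hle (k : ℕ) : ‖g k‖ * (bernoulliShift p).real (kabsFiber k) ≤
      2 * p * ((1 - p) ^ k * ‖g k‖) :=
    (mul_le_mul_of_nonneg_left (bernoulliShift_real_kabsFiber_le p k) (norm_nonneg _)).trans_eq
      (by ring)
  have hsum := hg.mul_left (2 * p : ℝ)
  calc _ ≤ ∑' k, ‖g k‖ * (bernoulliShift p).real (kabsFiber k) := norm_integral_fRoof_le g _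
    _ ≤ ∑' k, 2 * p * ((1 - p : ℝ) ^ k * ‖g k‖) :=
        (hsum.of_nonneg_of_le (fun k => by positivity) hle).tsum_le_tsum hle hsum
    _ = _ := by rw [tsum_mul_left, mul_assoc]

theorem isLittleO_integral_fRoof_negMulLog {g : ℕ → ℝ}
    (hg : g =o[atTop] fun k : ℕ => (k : ℝ)⁻¹) :
    (fun p : I => ∫ u, fRoof g u ∂bernoulliShift p) =o[𝓝[>] 0] fun p => Real.negMulLog p := by
  have hone_sub : Tendsto (fun p : I => (1 - p : ℝ)) (𝓝[>] 0) (𝓝[<] 1) := by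
    refine tendsto_nhdsWithin_iff.2 ⟨tendsto_nhdsWithin_of_tendsto_nhds ?_, ?_⟩
    · exact (continuous_const.sub continuous_subtype_val).tendsto' _ _ (sub_zero 1)
    · filter_upwards [self_mem_nhdsWithin] with p hp using sub_lt_self (1 : ℝ) hp
  have hseries : (fun p : I => ∑' k, (1 - p : ℝ) ^ k * ‖g k‖) =o[𝓝[>] 0]
      fun p => Real.log p := by
    simpa only [Function.comp_def, sub_sub_cancel, smul_eq_mul] using
      (isLittleO_tsum_pow_smul_log hg.norm_left).comp_tendsto hone_sub
  have hbound : (fun p : I => ∫ u, fRoof g u ∂bernoulliShift p) =O[𝓝[>] 0]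
      fun p => (p : ℝ) * ∑' k, (1 - p : ℝ) ^ k * ‖g k‖ := by
    refine Asymptotics.IsBigO.of_bound 2 ?_
    filter_upwards [self_mem_nhdsWithin] with p hp
    have hp0 : (0 : ℝ) < p := hp
    have hmem : (1 - p : ℝ) ∈ Set.Ico (0 : ℝ) 1 := ⟨(σ p).2.1, sub_lt_self 1 hp0⟩
    refine (norm_integral_fRoof_bernoulliShift_le
      (summable_pow_mul_norm hg.isBigO hmem)).trans ?_
    gcongr
    exact Real.le_norm_self _
  refine hbound.trans_isLittleO ?_
  simpa only [Real.negMulLog, neg_mul] using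
    ((Asymptotics.isBigO_refl (fun p : I => (p : ℝ)) _).mul_isLittleO hseries).neg_right

theorem tendsto_kolSinai_div_integral_fRoof {g : ℕ → ℝ}
    (hg : g =o[atTop] fun k : ℕ => (k : ℝ)⁻¹) :
    Tendsto (fun p : I => kolSinai shiftMap (bernoulliShift p) /
      ‖∫ u, fRoof g u ∂bernoulliShift p‖ₑ) (𝓝[>] 0) (𝓝 ⊤) := by
  have hne : ∀ᶠ p : I in 𝓝[>] 0, Real.negMulLog p ≠ 0 := by
    filter_upwards [Ioo_mem_nhdsGT zero_lt_one] with p hp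
    rw [Real.negMulLog_eq_neg]
    exact neg_ne_zero.2 (Real.mul_log_neg hp.1 hp.2).ne
  exact tendsto_nhds_top_mono' (tendsto_enorm_div_enorm_nhds_top
    (isLittleO_integral_fRoof_negMulLog hg) hne) fun p =>
      ENNReal.div_le_div_right (enorm_negMulLog_le_kolSinai_bernoulliShift p) _

end Roof

theorem stmt_15_general (g : ℕ → ℝ) (hg : ∀ k, 0 ≤ g k)
    (hkg : Tendsto (fun k : ℕ => (k : ℝ) * g k) atTop (𝓝 0)) :
    ⨆ (μ : Measure BSeq) (_ : IsProbabilityMeasure μ) (_ : μ.map shiftMap = μ)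
        (_ : μ ≠ Measure.dirac zeroSeq),
      kolSinai shiftMap μ / ENNReal.ofReal (∫ u, fRoof g u ∂μ) = ⊤ := by
  have : (𝓝[>] (0 : I)).NeBot := nhdsGT_neBot_of_exists_gt ⟨1, zero_lt_one⟩
  refine top_unique (le_of_tendsto (tendsto_kolSinai_div_integral_fRoof
    (isLittleO_natCast_inv_of_tendsto_mul hkg)) ?_)
  filter_upwards [self_mem_nhdsWithin] with p hp
  rw [Real.enorm_of_nonneg (integral_nonneg (fRoof_nonneg hg))]
  exact le_iSup₂_of_le (bernoulliShift p) inferInstance <|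
    le_iSup₂_of_le (measurePreserving_shiftMap_bernoulliShift p).map_eq
      (bernoulliShift_ne_dirac_zeroSeq p hp) le_rfl

/-- if `k g(k) → 0` (with `g > 0` and `Σ g(k) = ∞`), the singular
symbolic suspension flow over the full shift with roof `f(u) = g(k_u)` has infinite
topological entropy.  By the variational principle and Abramov's formula, its
topological entropy is `sup_{μ ≠ δ_*} h(μ)/∫ f dμ` over shift-invariant probability
measures. -/
theorem stmt_15 (g : ℕ → ℝ) (hgpos : ∀ k, 0 < g k)
    (hdiv : ∑' k : ℕ, ENNReal.ofReal (g k) = ⊤)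
    (hkg : Tendsto (fun k : ℕ => (k : ℝ) * g k) atTop (𝓝 0)) :
    ⨆ (μ : Measure BSeq) (_ : IsProbabilityMeasure μ) (_ : μ.map shiftMap = μ)
        (_ : μ ≠ Measure.dirac zeroSeq),
      kolSinai shiftMap μ / ENNReal.ofReal (∫ u, fRoof g u ∂μ) = ⊤ :=
  stmt_15_general g (fun k => (hgpos k).le) hkg
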